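/- arXiv:2311.08992 — 5 statements merged into one kernel-verified Lean document; each statement's English description precedes it below -/
import Mathlib

section
/- Let q be a prime power and let F be a finite field with q² elements. Then the number of triples (x, y, z) ∈ F³ satisfying the two equations y^{q+1} = x^q + x and z^{q+1} = y^q + y equals q⁴. -/
/-!
Call `T x = x ^ q + x` and `N x = x ^ (q + 1)` (the trace and norm from `F` to its subfield `S`
of elements with `c ^ q = c`). Both take values in `S`. Every fibre of `T` has at most `q` elements
and `S` has at most `q` elements, both being zero sets of polynomials of degree `q`; as the fibres
of `T` over `S` partition the `q ^ 2` elements of `F`, every fibre over `S` has exactly `q`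
elements (`card_trace_fibre`). The points of the curve are then counted by choosing `z` freely
(`q ^ 2` ways), then `y` with `T y = N z` (`q` ways), then `x` with `T x = N y` (`q` ways).
-/

open Finset Polynomial in
theorem card_trinomial_zeros_le {F : Type*} [Field F] [Fintype F] [DecidableEq F]
    {q : ℕ} (hq : 2 ≤ q) (a b : F) :
    #{x : F | x ^ q + (a * x + b) = 0} ≤ q := by
  have hlt : (C a * X + C b : F[X]).degree < q :=
    degree_linear_le.trans_lt (by exact_mod_cast hq)
  have hdeg : (X ^ q + (C a * X + C b) : F[X]).natDegree = q :=
    natDegree_eq_of_degree_eq_some <| by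
      rw [degree_add_eq_left_of_degree_lt (by rwa [degree_X_pow]), degree_X_pow]
  have hne : (X ^ q + (C a * X + C b) : F[X]) ≠ 0 := by
    intro h
    rw [h, natDegree_zero] at hdeg
    omega
  calc #{x : F | x ^ q + (a * x + b) = 0}
      ≤ #(X ^ q + (C a * X + C b) : F[X]).roots.toFinset := by
        refine card_le_card fun x hx => ?_
        rw [Multiset.mem_toFinset, mem_roots hne]
        simpa using hx
    _ ≤ (X ^ q + (C a * X + C b) : F[X]).natDegree :=
        (Multiset.toFinset_card_le _).trans (card_roots' _)
    _ = q := hdeg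

theorem trace_pow_eq {q : ℕ} (hq : IsPrimePow q) {F : Type*} [Field F] [Fintype F]
    (hF : Fintype.card F = q ^ 2) (x : F) : (x ^ q + x) ^ q = x ^ q + x := by
  obtain ⟨p, k, hp, -, rfl⟩ := hq
  have : Fact p.Prime := ⟨hp.nat_prime⟩
  have : CharP F p := charP_of_card_eq_prime_pow (f := k * 2) (by rw [hF, pow_mul])
  rw [add_pow_char_pow, ← pow_mul, ← sq, ← hF, FiniteField.pow_card, add_comm]

theorem norm_pow_eq {q : ℕ} {F : Type*} [Field F] [Fintype F]
    (hF : Fintype.card F = q ^ 2) (x : F) : (x ^ (q + 1)) ^ q = x ^ (q + 1) := by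
  rw [← pow_mul, add_mul, one_mul, ← sq, ← hF, pow_add, FiniteField.pow_card, pow_succ']

open Finset in
/-- The trace `x ↦ x ^ q + x` takes each value in the subfield `c ^ q = c` exactly `q` times. -/
theorem card_trace_fibre {q : ℕ} (hq : IsPrimePow q) {F : Type*} [Field F] [Fintype F]
    [DecidableEq F] (hF : Fintype.card F = q ^ 2) {c : F} (hc : c ^ q = c) :
    #{x : F | c = x ^ q + x} = q := by
  have hle : ∀ d : F, #{x : F | x ^ q + x = d} ≤ q := fun d => by
    refine (card_le_card fun x hx => ?_).trans (card_trinomial_zeros_le hq.two_le 1 (-d))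
    simp only [mem_filter, mem_univ, true_and] at hx ⊢
    linear_combination hx
  have hS : #{d : F | d ^ q = d} ≤ q := by
    refine (card_le_card fun x hx => ?_).trans (card_trinomial_zeros_le hq.two_le (-1) 0)
    simp only [mem_filter, mem_univ, true_and] at hx ⊢
    linear_combination hx
  have hsum : q ^ 2 = ∑ d : F with d ^ q = d, #{x : F | x ^ q + x = d} := by
    rw [← hF, ← card_univ]
    exact card_eq_sum_card_fiberwise fun x _ => by simpa using trace_pow_eq hq hF x
  -- `q ^ 2` is a sum of at most `q` terms, each at most `q`, so no term can be smaller than `q`.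
  simp_rw [eq_comm (a := c)]
  refine (hle c).antisymm (not_lt.mp fun hlt => ?_)
  have := sum_lt_sum (s := {d : F | d ^ q = d}) (fun d _ => hle d) ⟨c, by simpa using hc, hlt⟩
  rw [← hsum, sum_const, smul_eq_mul, sq] at this
  exact absurd this (not_lt.mpr (Nat.mul_le_mul_right q hS))

/-- The curve `y^{q+1} = x^q + x`, `z^{q+1} = y^q + y` has exactly `q^4` affine
points over the field with `q^2` elements. -/
theorem stmt_4 (q : ℕ) (hq : IsPrimePow q) (F : Type*) [Field F] [Fintype F]
    (hF : Fintype.card F = q ^ 2) :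
    Nat.card {t : F × F × F // t.2.1 ^ (q + 1) = t.1 ^ q + t.1 ∧
        t.2.2 ^ (q + 1) = t.2.1 ^ q + t.2.1} = q ^ 4 := by
  classical
  have key : ∀ w : F, Nat.card {x : F // w ^ (q + 1) = x ^ q + x} = q := fun w => by
    rw [Nat.card_eq_fintype_card, Fintype.card_subtype]
    exact card_trace_fibre hq hF (norm_pow_eq hF w)
  let e : {t : F × F × F // t.2.1 ^ (q + 1) = t.1 ^ q + t.1 ∧
        t.2.2 ^ (q + 1) = t.2.1 ^ q + t.2.1} ≃
      (Σ z : F, Σ y : {y : F // z ^ (q + 1) = y ^ q + y},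
        {x : F // y.1 ^ (q + 1) = x ^ q + x}) :=
    { toFun := fun t => ⟨t.1.2.2, ⟨t.1.2.1, t.2.2⟩, ⟨t.1.1, t.2.1⟩⟩
      invFun := fun s => ⟨(s.2.2.1, s.2.1.1, s.1), s.2.2.2, s.2.1.2⟩
      left_inv := fun _ => rfl
      right_inv := fun _ => rfl }
  have inner : ∀ z : F, Nat.card (Σ y : {y : F // z ^ (q + 1) = y ^ q + y},
      {x : F // y.1 ^ (q + 1) = x ^ q + x}) = q * q := fun z => by
    rw [Nat.card_sigma, Finset.sum_congr rfl fun y _ => key y.1, Finset.sum_const,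
      Finset.card_univ, ← Nat.card_eq_fintype_card, key, smul_eq_mul]
  rw [Nat.card_congr e, Nat.card_sigma, Finset.sum_congr rfl fun z _ => inner z,
    Finset.sum_const, Finset.card_univ, hF, smul_eq_mul]
  ring
end

section
/- Let q be an odd prime power and let F be a finite field with q² elements. Then the number of elements α ∈ F for which there exists β ∈ F with β ≠ 0, β^q + β = 0 and β^{q+1} = α^q + α equals (q² − q)/2. -/
/-!
Write `σ x = x ^ q`; this is an additive involution of `F`. Let `T = {x | x ^ q + x = 0}`. For
`β ∈ T` one has `β ^ (q + 1) = -β ^ 2`, so the equation in question is `α ^ q + α = -β ^ 2`.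
The pairs `(α, β)` with `β ∈ T \ {0}` satisfying it are counted in two ways. For fixed `β` the
solutions `α` form the coset `-β ^ 2 / 2 + T` (here `q` is odd), and for fixed `α` the solutions
are `±β`, if there are any. As `|T| = q` (`card_trace_zero`), the number of `α` is `(q - 1) q / 2`.
-/

/-- In a field of cardinality `q ^ 2`, with `q` a prime power, `x ↦ x ^ q` is
additive: the characteristic is the prime dividing `q`. -/
lemma add_pow_q (q : ℕ) (hq : IsPrimePow q) (F : Type*) [Field F]
    [Fintype F] (hF : Fintype.card F = q ^ 2) (x y : F) : (x + y) ^ q = x ^ q + y ^ q := by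
  obtain ⟨p, k, hp, hk, rfl⟩ := hq
  have hp' : p.Prime := hp.nat_prime
  obtain ⟨r, hr⟩ := CharP.exists F
  obtain ⟨n, hrp, hn⟩ := FiniteField.card F r
  have hdvd : r ∣ (p ^ k) ^ 2 := by
    rw [← hF, hn]
    exact dvd_pow_self r n.pos.ne'
  have hrp' : r = p :=
    (Nat.prime_dvd_prime_iff_eq hrp hp').1 (hrp.dvd_of_dvd_pow (hrp.dvd_of_dvd_pow hdvd))
  subst hrp'
  have : Fact r.Prime := ⟨hrp⟩
  exact add_pow_char_pow x y r k

open Polynomial in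
/-- A root bound for `X ^ q + c X`, used for `c = 1` (kernel of the trace `x ↦ x ^ q + x`) and
`c = -1` (its image). -/
lemma card_roots_le (q : ℕ) (hq : 1 < q) (F : Type*) [Field F] [Fintype F] [DecidableEq F]
    (c : F) : (Finset.univ.filter fun x : F => x ^ q + c * x = 0).card ≤ q := by
  have hdeg : (C c * X : F[X]).degree < (q : ℕ) :=
    (degree_C_mul_X_le c).trans_lt (by exact_mod_cast hq)
  have hmonic : (X ^ q + C c * X : F[X]).Monic := monic_X_pow_add hdeg
  have hnat : (X ^ q + C c * X : F[X]).natDegree = q :=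
    natDegree_eq_of_degree_eq_some (by
      rw [degree_add_eq_left_of_degree_lt] <;> simp only [degree_X_pow]; exact hdeg)
  calc _ ≤ (X ^ q + C c * X : F[X]).roots.toFinset.card := by
        apply Finset.card_le_card
        intro x hx
        simpa [hmonic.ne_zero] using hx
    _ ≤ Multiset.card (X ^ q + C c * X : F[X]).roots := Multiset.toFinset_card_le _
    _ ≤ _ := card_roots' _
    _ = q := hnat

/-- The kernel of the trace `x ↦ x ^ q + x` has exactly `q` elements: the kernel and the image
each have at most `q` elements, and their cardinalities multiply to `q ^ 2`. -/
lemma card_trace_zero (q : ℕ) (hq : IsPrimePow q) (F : Type*) [Field F]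
    [Fintype F] [DecidableEq F] (hF : Fintype.card F = q ^ 2) :
    (Finset.univ.filter fun x : F => x ^ q + x = 0).card = q := by
  have hadd := add_pow_q q hq F hF
  have hq1 := hq.one_lt
  have hinv : ∀ x : F, (x ^ q) ^ q = x := fun x => by
    rw [← pow_mul, ← sq, ← hF, FiniteField.pow_card]
  let f : F →+ F := AddMonoidHom.mk' (fun x => x ^ q + x) fun a b => by rw [hadd]; ring
  have hle := card_roots_le q hq1 F 1
  simp only [one_mul] at hle
  have hker : Nat.card f.ker = (Finset.univ.filter fun x : F => x ^ q + x = 0).card := by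
    rw [← Nat.card_eq_finsetCard]
    exact Nat.card_congr (Equiv.subtypeEquivRight fun x => by simp [f, AddMonoidHom.mem_ker])
  have hrange : Nat.card f.range ≤ q := by
    refine le_trans ?_ (card_roots_le q hq1 F (-1))
    rw [← Nat.card_eq_finsetCard]
    refine Nat.card_le_card_of_injective (fun y => ⟨y.1, ?_⟩) fun a b h => ?_
    · obtain ⟨_, x, rfl⟩ := y
      simp only [f, Finset.mem_filter, Finset.mem_univ, true_and, AddMonoidHom.mk'_apply, hadd,
        hinv]
      ring
    · exact Subtype.ext (congrArg (fun z => z.1) h)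
  have hprod : Nat.card f.ker * Nat.card f.range = q ^ 2 := by
    rw [← hF, ← Nat.card_eq_fintype_card, ← AddSubgroup.card_mul_index f.ker,
      AddSubgroup.index_ker]
  rw [hker] at hprod
  nlinarith

/-- For `q` an odd prime power and `F` the field with `q²` elements, there are
exactly `(q² − q)/2` elements `α ∈ F` admitting a nonzero `β ∈ F` with
`β^q + β = 0` and `β^{q+1} = α^q + α`. -/
theorem stmt_9 (q : ℕ) (hq : IsPrimePow q) (hodd : Odd q) (F : Type*) [Field F]
    [Fintype F] (hF : Fintype.card F = q ^ 2) :
    Nat.card {α : F // ∃ β : F, β ≠ 0 ∧ β ^ q + β = 0 ∧ β ^ (q + 1) = α ^ q + α}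
      = (q ^ 2 - q) / 2 := by
  classical
  have hadd := add_pow_q q hq F hF
  have hT := card_trace_zero q hq F hF
  have hq0 : q ≠ 0 := hq.pos.ne'
  have h2 : (2 : F) ≠ 0 := by
    apply Ring.two_ne_zero
    rw [Ne, FiniteField.even_card_iff_char_two, hF]
    exact Nat.mod_two_ne_zero.2 (Nat.odd_iff.1 hodd.pow)
  have hpow2 : (2 : F) ^ q = 2 := by
    rw [← one_add_one_eq_two, hadd, one_pow]
  set T := Finset.univ.filter fun x : F => x ^ q + x = 0 with hTdef
  set S := Finset.univ.filter fun α : F =>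
    ∃ β : F, β ≠ 0 ∧ β ^ q + β = 0 ∧ β ^ (q + 1) = α ^ q + α with hSdef
  have hcard : Nat.card {α : F // ∃ β : F, β ≠ 0 ∧ β ^ q + β = 0 ∧
      β ^ (q + 1) = α ^ q + α} = S.card := by
    rw [Nat.card_eq_fintype_card, Fintype.card_subtype]
  let P := Finset.univ.filter fun z : F × F =>
    z.2 ≠ 0 ∧ z.2 ^ q + z.2 = 0 ∧ z.2 ^ (q + 1) = z.1 ^ q + z.1
  have hP1 : P.card = ∑ α ∈ S, 2 := by
    rw [Finset.card_eq_sum_card_fiberwise (f := Prod.fst) (t := S)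
      (fun z hz => by simp only [P, S, Finset.coe_filter, Finset.mem_univ, true_and,
                        Set.mem_ofPred_eq] at hz ⊢; exact ⟨z.2, hz⟩)]
    refine Finset.sum_congr rfl fun α hα => ?_
    obtain ⟨β, hβ0, hβ, hαβ⟩ := (Finset.mem_filter.1 hα).2
    have hne : (α, β) ≠ (α, -β) := by
      intro h
      have h' : β = -β := (Prod.ext_iff.1 h).2
      exact mul_ne_zero h2 hβ0 (by linear_combination h')
    rw [← Finset.card_pair hne]
    congr 1
    ext ⟨a, b⟩
    simp only [P, Finset.mem_filter, Finset.mem_univ, true_and, Finset.mem_insert,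
      Finset.mem_singleton, Prod.mk.injEq]
    rw [pow_succ] at hαβ
    constructor
    · rintro ⟨⟨_, hb, hab⟩, rfl⟩
      rw [pow_succ] at hab
      have : b ^ 2 = β ^ 2 := by linear_combination b * hb - β * hβ - hab + hαβ
      rcases sq_eq_sq_iff_eq_or_eq_neg.1 this with h | h <;> simp [h]
    · rintro (⟨rfl, rfl⟩ | ⟨rfl, rfl⟩)
      · exact ⟨⟨hβ0, hβ, by rw [pow_succ, hαβ]⟩, rfl⟩
      · refine ⟨⟨neg_ne_zero.2 hβ0, ?_, ?_⟩, rfl⟩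
        · rw [hodd.neg_pow]; linear_combination -hβ
        · rw [pow_succ, hodd.neg_pow]; linear_combination hαβ
  have hP2 : P.card = ∑ β ∈ T.erase 0, q := by
    rw [Finset.card_eq_sum_card_fiberwise (f := Prod.snd) (t := T.erase 0)
      (fun z hz => by simp only [P, T, Finset.coe_filter, Finset.mem_univ, true_and,
                        Set.mem_ofPred_eq, Finset.coe_erase, Set.mem_sdiff,
                        Set.mem_singleton_iff] at hz ⊢; exact ⟨hz.2.1, hz.1⟩)]
    refine Finset.sum_congr rfl fun β hβT => ?_
    obtain ⟨hβ0, hβ⟩ := Finset.mem_erase.1 hβT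
    replace hβ := (Finset.mem_filter.1 hβ).2
    have hβq : β ^ q = -β := eq_neg_of_add_eq_zero_left hβ
    -- The constant `β ^ 2 / 2` is fixed by `x ↦ x ^ q`.
    have hc : (β ^ 2 / 2) ^ q = β ^ 2 / 2 := by
      rw [div_pow, hpow2, ← pow_mul, mul_comm, pow_mul, hβq, neg_sq]
    conv_rhs => rw [← hT]
    symm
    refine Finset.card_bij' (fun t _ => (t - β ^ 2 / 2, β)) (fun z _ => z.1 + β ^ 2 / 2)
      ?_ ?_ ?_ ?_
    · intro t ht
      have ht' := (Finset.mem_filter.1 ht).2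
      simp only [P, Finset.mem_filter, Finset.mem_univ, true_and, and_true]
      refine ⟨hβ0, hβ, ?_⟩
      rw [sub_eq_add_neg, hadd, hodd.neg_pow, hc, pow_succ, hβq]
      field_simp
      linear_combination -2 * ht'
    · rintro ⟨a, b⟩ hz
      simp only [P, Finset.mem_filter, Finset.mem_univ, true_and] at hz
      obtain ⟨⟨_, _, hab⟩, rfl⟩ := hz
      simp only [T, Finset.mem_filter, Finset.mem_univ, true_and]
      rw [pow_succ, hβq] at hab
      rw [hadd, hc]
      field_simp
      linear_combination -2 * hab
    · intro t _; simp
    · rintro ⟨a, b⟩ hz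
      have := (Finset.mem_filter.1 hz).2
      simp_all
  have h0T : (0 : F) ∈ T := by simp [T, hq0]
  rw [Finset.sum_const, smul_eq_mul] at hP1 hP2
  rw [Finset.card_erase_of_mem h0T, hT] at hP2
  have : q ^ 2 - q = (q - 1) * q := by rw [Nat.sub_mul, one_mul, sq]
  rw [hcard, this, ← hP2, hP1, Nat.mul_div_cancel _ two_pos]
end

section
/- Let q be a prime power, let ℓ ≥ 1 be a divisor of q + 1, and let F be a finite field with q² elements. Then the number of elements a ∈ F such that there exists b ∈ F with b^q + b = a^ℓ equals 1 + ℓ(q − 1). Moreover, for each such a the equation b^q + b = a^ℓ has exactly q solutions b ∈ F, so the number of pairs (a, b) ∈ F² with b^q + b = a^ℓ equals q(1 + ℓ(q − 1)). -/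
/-!
The map `b ↦ b ^ q + b` is the trace from `F` to its subfield `{c | c ^ q = c}`: it is additive,
and its values are fixed by `c ↦ c ^ q` because `b ^ (q ^ 2) = b`. Its kernel and the set of fixed
points are root sets of polynomials of degree `q`, so each has at most `q` elements; as the orders
of kernel and image multiply to `q ^ 2`, both are equal to `q`, and the image consists of all
`c` with `c ^ q = c` (`trace_card_ker_and_range`). Hence every nonempty fibre has `q` elements,
and `b ^ q + b = a ^ ℓ` is solvable exactly when `a = 0` or `a ^ (ℓ * (q - 1)) = 1`. Since
`ℓ * (q - 1)` divides `q ^ 2 - 1`, the cyclic group `Fˣ` has exactly `ℓ * (q - 1)` such elements.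
-/

lemma ncard_pow_add_mul_eq_zero_le {F : Type*} [Field F] {q : ℕ} (hq : 1 < q) (c : F) :
    {x : F | x ^ q + c * x = 0}.ncard ≤ q := by
  classical
  let P : Polynomial F := Polynomial.X ^ q + Polynomial.C c * Polynomial.X
  have hlt : (Polynomial.C c * Polynomial.X).degree < (q : WithBot ℕ) :=
    (Polynomial.degree_C_mul_X_le c).trans_lt (by exact_mod_cast hq)
  have hP : P.Monic := Polynomial.monic_X_pow_add hlt
  have hdeg : P.natDegree = q :=
    Polynomial.natDegree_eq_of_degree_eq_some (by
      rw [Polynomial.degree_add_eq_left_of_degree_lt (by simpa using hlt)]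
      simp)
  have hset : {x : F | x ^ q + c * x = 0} = (P.roots.toFinset : Set F) := by
    ext x
    simp [hP.ne_zero, P]
  rw [hset, Set.ncard_coe_finset]
  exact (Multiset.toFinset_card_le _).trans (hdeg ▸ P.card_roots')

/-- The map `b ↦ b ^ q + b` (the trace, when `F` has `q ^ 2` elements), as an additive
homomorphism. -/
def traceHom (F : Type*) [Field F] (q : ℕ) (hadd : ∀ x y : F, (x + y) ^ q = x ^ q + y ^ q) :
    F →+ F :=
  AddMonoidHom.mk' (fun b => b ^ q + b) (fun x y => by rw [hadd]; ring)

lemma trace_card_ker_and_range {F : Type*} [Field F] [Fintype F] {q : ℕ} (hq : 1 < q)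
    (hF : Fintype.card F = q ^ 2) (hadd : ∀ x y : F, (x + y) ^ q = x ^ q + y ^ q) :
    Nat.card (traceHom F q hadd).ker = q ∧
      ∀ c : F, (∃ b : F, b ^ q + b = c) ↔ c ^ q = c := by
  set f := traceHom F q hadd with hf
  have hker : Nat.card f.ker ≤ q := by
    have h := ncard_pow_add_mul_eq_zero_le (F := F) hq 1
    simp only [one_mul] at h
    exact h
  have hfix : {x : F | x ^ q = x}.ncard ≤ q := by
    have h := ncard_pow_add_mul_eq_zero_le (F := F) hq (-1)
    simpa [← sub_eq_add_neg, sub_eq_zero] using h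
  have hsub : (f.range : Set F) ⊆ {x : F | x ^ q = x} := by
    rintro _ ⟨b, rfl⟩
    change (b ^ q + b) ^ q = b ^ q + b
    have hb : (b ^ q) ^ q = b := by
      rw [← pow_mul, ← sq, ← hF, FiniteField.pow_card]
    rw [hadd, hb, add_comm]
  have hrange : Nat.card f.range ≤ {x : F | x ^ q = x}.ncard :=
    Set.ncard_le_ncard hsub (Set.toFinite _)
  have hmul : Nat.card f.ker * Nat.card f.range = q * q := by
    rw [← AddSubgroup.index_ker, AddSubgroup.card_mul_index, Nat.card_eq_fintype_card, hF, sq]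
  have hker_eq : Nat.card f.ker = q := by nlinarith
  have hrange_eq : Nat.card f.range = q := by nlinarith
  refine ⟨hker_eq, fun c => ?_⟩
  have heq : (f.range : Set F) = {x : F | x ^ q = x} :=
    Set.eq_of_subset_of_ncard_le hsub (hfix.trans hrange_eq.ge) (Set.toFinite _)
  exact Set.ext_iff.mp heq c

/-- Every nonempty fibre of an additive homomorphism is a translate of the kernel. -/
lemma card_fibre_eq_card_ker {G H : Type*} [AddGroup G] [AddGroup H] (f : G →+ H) {c : H}
    {b : G} (hb : f b = c) : Nat.card {x : G // f x = c} = Nat.card f.ker :=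
  Nat.card_congr ((Equiv.addRight (-b)).subtypeEquiv fun x => by
    simp [AddMonoidHom.mem_ker, hb, ← sub_eq_add_neg, sub_eq_zero])

lemma card_zero_or_pow_eq_one {F : Type*} [Field F] [Fintype F] {n : ℕ}
    (hn : n ∣ Fintype.card F - 1) :
    Nat.card {a : F // a = 0 ∨ a ^ n = 1} = 1 + n := by
  have hn0 : n ≠ 0 := by
    rintro rfl
    have := Fintype.one_lt_card (α := F)
    have := Nat.eq_zero_of_zero_dvd hn
    omega
  have hunits : Nat.card (powMonoidHom n : Fˣ →* Fˣ).ker = n := by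
    rw [IsCyclic.card_powMonoidHom_ker, Nat.card_units, Nat.card_eq_fintype_card,
      Nat.gcd_eq_right hn]
  have himage : {a : F | a ^ n = 1}.ncard = n := by
    have : {a : F | a ^ n = 1} =
        Set.image Units.val ((powMonoidHom n : Fˣ →* Fˣ).ker : Set Fˣ) := by
      ext a
      constructor
      · intro ha
        refine ⟨Units.ofPowEqOne a n ha hn0, ?_, rfl⟩
        exact Units.pow_ofPowEqOne ha hn0
      · rintro ⟨u, hu, rfl⟩
        have hu' : u ^ n = 1 := hu
        simp [← Units.val_pow_eq_pow_val, hu']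
    rw [this, Set.ncard_image_of_injective _ Units.val_injective]
    exact hunits
  have hins : {a : F | a = 0 ∨ a ^ n = 1} = insert 0 {a : F | a ^ n = 1} := rfl
  change {a : F | a = 0 ∨ a ^ n = 1}.ncard = 1 + n
  rw [hins, Set.ncard_insert_of_notMem (by simp [hn0]) (Set.toFinite _), himage, add_comm]

/-- For `ℓ ≥ 1` a divisor of `q + 1` and `F` the field with `q²` elements:
there are exactly `1 + ℓ(q−1)` elements `a ∈ F` for which `b^q + b = a^ℓ` has a
solution `b ∈ F`; for each such `a` there are exactly `q` solutions `b`; hence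
there are `q(1 + ℓ(q−1))` pairs `(a, b)` with `b^q + b = a^ℓ`. -/
theorem stmt_11 (q ℓ : ℕ) (hq : IsPrimePow q) (hℓ : 1 ≤ ℓ) (hdvd : ℓ ∣ q + 1)
    (F : Type*) [Field F] [Fintype F] (hF : Fintype.card F = q ^ 2) :
    Nat.card {a : F // ∃ b : F, b ^ q + b = a ^ ℓ} = 1 + ℓ * (q - 1) ∧
    (∀ a : F, (∃ b : F, b ^ q + b = a ^ ℓ) →
      Nat.card {b : F // b ^ q + b = a ^ ℓ} = q) ∧
    Nat.card {p : F × F // p.2 ^ q + p.2 = p.1 ^ ℓ} = q * (1 + ℓ * (q - 1)) := by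
  classical
  have hq1 : 1 < q := hq.one_lt
  have hadd : ∀ x y : F, (x + y) ^ q = x ^ q + y ^ q := by
    obtain ⟨p, k, hp, -, rfl⟩ := (isPrimePow_nat_iff q).mp hq
    have : Fact p.Prime := ⟨hp⟩
    have : CharP F p := charP_of_card_eq_prime_pow (f := k * 2) (by rw [hF, pow_mul])
    exact fun x y => add_pow_char_pow x y p k
  obtain ⟨hker, hsolv⟩ := trace_card_ker_and_range hq1 hF hadd
  have hsolv' : ∀ a : F, (∃ b : F, b ^ q + b = a ^ ℓ) ↔ a = 0 ∨ a ^ (ℓ * (q - 1)) = 1 := by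
    intro a
    rw [hsolv]
    by_cases ha : a = 0
    · simp [ha, zero_pow (show ℓ ≠ 0 by omega), zero_pow (show q ≠ 0 by omega)]
    · have ha' : a ^ ℓ ≠ 0 := pow_ne_zero _ ha
      have hpow : (a ^ ℓ) ^ q = (a ^ ℓ) ^ (q - 1) * a ^ ℓ := by
        rw [← pow_succ, Nat.sub_add_cancel hq1.le]
      rw [hpow, mul_eq_right₀ ha', pow_mul]
      simp [ha]
  have hcount : Nat.card {a : F // ∃ b : F, b ^ q + b = a ^ ℓ} = 1 + ℓ * (q - 1) := by
    rw [Nat.card_congr (Equiv.subtypeEquivRight hsolv')]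
    refine card_zero_or_pow_eq_one ?_
    have hfac : Fintype.card F - 1 = (q + 1) * (q - 1) := by
      rw [hF, ← Nat.sq_sub_sq, one_pow]
    exact hfac ▸ Nat.mul_dvd_mul_right hdvd _
  have hfibre : ∀ a : F, (∃ b : F, b ^ q + b = a ^ ℓ) →
      Nat.card {b : F // b ^ q + b = a ^ ℓ} = q := by
    rintro a ⟨b, hb⟩
    exact (card_fibre_eq_card_ker (traceHom F q hadd) hb).trans hker
  refine ⟨hcount, hfibre, ?_⟩
  let e : {p : F × F // p.2 ^ q + p.2 = p.1 ^ ℓ} ≃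
      Σ a : {a : F // ∃ b : F, b ^ q + b = a ^ ℓ}, {b : F // b ^ q + b = a.1 ^ ℓ} :=
    { toFun := fun p => ⟨⟨p.1.1, p.1.2, p.2⟩, ⟨p.1.2, p.2⟩⟩
      invFun := fun s => ⟨(s.1.1, s.2.1), s.2.2⟩
      left_inv := fun _ => rfl
      right_inv := fun _ => rfl }
  rw [Nat.card_congr e, Nat.card_sigma, Finset.sum_congr rfl fun a _ => hfibre a.1 a.2,
    Finset.sum_const, Finset.card_univ, ← Nat.card_eq_fintype_card, hcount, smul_eq_mul, mul_comm]
end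

section
/- Let F be a field with 8 elements and α ∈ F an element satisfying α³ + α + 1 = 0. Consider the F-linear subspace C of F⁸ spanned by the four vectors r₁ = (1,1,1,1,1,1,1,1), r₂ = (0,0,α+1,α+1,α²+α+1,α²+α+1,α²+1,α²+1), r₃ = (0,0,α²+1,α²+1,α+1,α+1,α²+α+1,α²+α+1), r₄ = (0,1,α²+α,α²+α+1,α²,α²+1,α,α+1). Then C has dimension 4 over F and its minimum distance (the least Hamming weight of a nonzero element of C) equals exactly 4. -/
/-!
The rows are the functions `1, x, x², y` evaluated at the eight affine points of
`y² + y = x³` lying over `x ∈ {0, α³, α⁵, α⁶} = {0, α + 1, α² + α + 1, α² + 1}`; the points come in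
pairs `(x, y)`, `(x, y + 1)`. Take the codeword of `a + b x + c x² + d y` with `(a, b, c, d) ≠ 0`.

* If `d ≠ 0`, the two entries of each pair differ by `d`, so each pair has a nonzero entry.
* If `d = 0`, both entries of a pair equal `a + b x + c x²`, a nonzero polynomial of degree at most
  `2`, which vanishes at no more than two of the four values of `x`.

So the weight is at least `4` (`four_le_hammingNorm`). In particular the rows are linearly
independent, and the codeword of `x² + (α + 1) x = x (x + α + 1)`, which vanishes on two pairs,
has weight exactly `4`.
-/

/-- A polynomial of degree at most `2` with three distinct roots is zero. -/
lemma quad_eq_zero {F : Type*} [Field F] {a b c x y z : F} (hxy : x ≠ y) (hxz : x ≠ z) (hyz : y ≠ z)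
    (h1 : a + b * x + c * x ^ 2 = 0) (h2 : a + b * y + c * y ^ 2 = 0)
    (h3 : a + b * z + c * z ^ 2 = 0) : a = 0 ∧ b = 0 ∧ c = 0 := by
  have e1 : b + c * (x + y) = 0 :=
    mul_left_cancel₀ (sub_ne_zero.2 hxy) (by linear_combination h1 - h2)
  have e2 : b + c * (x + z) = 0 :=
    mul_left_cancel₀ (sub_ne_zero.2 hxz) (by linear_combination h1 - h3)
  have hc : c = 0 := mul_left_cancel₀ (sub_ne_zero.2 hyz) (by linear_combination e1 - e2)
  subst hc
  have hb : b = 0 := by linear_combination e1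
  subst hb
  exact ⟨by linear_combination h1, rfl, rfl⟩

/-- A word is heavy if its four consecutive pairs of entries either each differ by a common
`d ≠ 0`, or (`d = 0`) are constant with values those of a nonzero polynomial of degree at most `2`
at four distinct points. -/
lemma four_le_hammingNorm_of_pairs {F : Type*} [Field F] [DecidableEq F] {a b c d x y z t : F}
    (hxy : x ≠ y) (hxz : x ≠ z) (hxt : x ≠ t) (hyz : y ≠ z) (hyt : y ≠ t) (hzt : z ≠ t)
    (hne : ¬ (a = 0 ∧ b = 0 ∧ c = 0 ∧ d = 0)) (v : Fin 8 → F)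
    (h01 : v 1 = v 0 + d) (h23 : v 3 = v 2 + d) (h45 : v 5 = v 4 + d) (h67 : v 7 = v 6 + d)
    (h0 : d = 0 → v 0 = a + b * x + c * x ^ 2) (h2 : d = 0 → v 2 = a + b * y + c * y ^ 2)
    (h4 : d = 0 → v 4 = a + b * z + c * z ^ 2) (h6 : d = 0 → v 6 = a + b * t + c * t ^ 2) :
    4 ≤ hammingNorm v := by
  have hn : hammingNorm v = ∑ i, if v i ≠ 0 then 1 else 0 := by
    rw [hammingNorm, Finset.card_filter]
  rw [hn, Fin.sum_univ_eight]
  by_cases hd : d = 0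
  · have key : ∀ {p q r : F}, p ≠ q → p ≠ r → q ≠ r → a + b * p + c * p ^ 2 = 0 →
        a + b * q + c * q ^ 2 = 0 → a + b * r + c * r ^ 2 = 0 → False := by
      intro p q r hpq hpr hqr e1 e2 e3
      obtain ⟨ha, hb, hc⟩ := quad_eq_zero hpq hpr hqr e1 e2 e3
      exact hne ⟨ha, hb, hc, hd⟩
    have k1 := key hxy hxz hyz
    have k2 := key hxy hxt hyt
    have k3 := key hxz hxt hzt
    have k4 := key hyz hyt hzt
    rw [← h0 hd, ← h2 hd, ← h4 hd] at k1
    rw [← h0 hd, ← h2 hd, ← h6 hd] at k2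
    rw [← h0 hd, ← h4 hd, ← h6 hd] at k3
    rw [← h2 hd, ← h4 hd, ← h6 hd] at k4
    rw [h01, h23, h45, h67, hd]
    simp only [add_zero]
    split_ifs <;> first | omega | (exfalso; simp_all)
  · have pair : ∀ {p q : F}, q = p + d →
        1 ≤ (if p ≠ 0 then 1 else 0) + (if q ≠ 0 then 1 else 0) := by
      intro p q h
      by_cases hp : p = 0
      · have hq : q ≠ 0 := by rw [h, hp, zero_add]; exact hd
        simp [hq]
      · simp [hp]
    have p1 := pair h01
    have p2 := pair h23
    have p3 := pair h45
    have p4 := pair h67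
    omega

/-- The weight bound for the codeword of `a + b x + c x² + d y`: characteristic `2` and
`α³ + α + 1 = 0` make the abscissas `0, α³, α⁵, α⁶` distinct, and the third row is `x²`. -/
lemma four_le_hammingNorm {F : Type*} [Field F] [DecidableEq F] {α : F} (h2 : (2 : F) = 0)
    (hα : α ^ 3 + α + 1 = 0) (a b c d : F) (hne : ¬ (a = 0 ∧ b = 0 ∧ c = 0 ∧ d = 0)) :
    4 ≤ hammingNorm (a • ![1, 1, 1, 1, 1, 1, 1, 1] +
      b • ![0, 0, α + 1, α + 1, α ^ 2 + α + 1, α ^ 2 + α + 1, α ^ 2 + 1, α ^ 2 + 1] +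
      c • ![0, 0, α ^ 2 + 1, α ^ 2 + 1, α + 1, α + 1, α ^ 2 + α + 1, α ^ 2 + α + 1] +
      d • ![0, 1, α ^ 2 + α, α ^ 2 + α + 1, α ^ 2, α ^ 2 + 1, α, α + 1] : Fin 8 → F) := by
  have ha0 : α ≠ 0 := by
    rintro rfl
    simp at hα
  have ha1 : α + 1 ≠ 0 := fun h => ha0 (pow_eq_zero_iff (n := 3) (by norm_num) |>.1
    (by linear_combination hα - h))
  refine four_le_hammingNorm_of_pairs (a := a) (b := b) (c := c) (d := d) (x := 0) (y := α + 1)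
    (z := α ^ 2 + α + 1) (t := α ^ 2 + 1) ha1.symm ?_ ?_ ?_ ?_ ?_ hne _ ?_ ?_ ?_ ?_ ?_ ?_ ?_ ?_
  · intro h
    exact mul_ne_zero ha1 ha1 (by linear_combination (-α) * h - hα + h2 * (α + 1))
  · intro h
    exact mul_ne_zero ha1 ha1 (by linear_combination -h + h2 * α)
  · intro h
    exact pow_ne_zero 2 ha0 (by linear_combination -h)
  · intro h
    exact mul_ne_zero ha0 ha1 (by linear_combination -h + h2 * α)
  · intro h
    exact ha0 (by linear_combination h)
  · simp
  · simp; ring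
  · simp; ring
  · simp; ring
  · simp
  · intro hd
    simp [hd]
    exact Or.inl (by linear_combination -h2 * α)
  · intro hd
    simp [hd]
    exact Or.inl (by linear_combination -α * hα - h2 * (α ^ 3 + α ^ 2))
  · intro hd
    simp [hd]
    exact Or.inl (by linear_combination -α * hα + h2 * α)

/-- Over the field with 8 elements (`α³ + α + 1 = 0`), the code spanned by the four
given rows is an `[8, 4, 4]` code: it has dimension 4 and minimum Hamming weight
exactly 4. -/
theorem stmt_16 (F : Type*) [Field F] [Fintype F] [DecidableEq F]
    (hF : Fintype.card F = 8) (α : F) (hα : α ^ 3 + α + 1 = 0)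
    (C : Submodule F (Fin 8 → F))
    (hC : C = Submodule.span F
      ({![1, 1, 1, 1, 1, 1, 1, 1],
        ![0, 0, α + 1, α + 1, α ^ 2 + α + 1, α ^ 2 + α + 1, α ^ 2 + 1, α ^ 2 + 1],
        ![0, 0, α ^ 2 + 1, α ^ 2 + 1, α + 1, α + 1, α ^ 2 + α + 1, α ^ 2 + α + 1],
        ![0, 1, α ^ 2 + α, α ^ 2 + α + 1, α ^ 2, α ^ 2 + 1, α, α + 1]} :
        Set (Fin 8 → F))) :
    Module.finrank F C = 4 ∧
    sInf {w : ℕ | ∃ v ∈ C, v ≠ 0 ∧ hammingNorm v = w} = 4 := by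
  have h2 : (2 : F) = 0 := by
    have h8 : ((Fintype.card F : ℕ) : F) = 0 := Nat.cast_card_eq_zero F
    rw [hF] at h8
    exact pow_eq_zero_iff (n := 3) (by norm_num) |>.1 (by push_cast at h8; linear_combination h8)
  have key := four_le_hammingNorm h2 hα
  have hspan : ∀ v, v ∈ C ↔ ∃ a b c d : F, a • ![1, 1, 1, 1, 1, 1, 1, 1] +
      b • ![0, 0, α + 1, α + 1, α ^ 2 + α + 1, α ^ 2 + α + 1, α ^ 2 + 1, α ^ 2 + 1] +
      c • ![0, 0, α ^ 2 + 1, α ^ 2 + 1, α + 1, α + 1, α ^ 2 + α + 1, α ^ 2 + α + 1] +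
      d • ![0, 1, α ^ 2 + α, α ^ 2 + α + 1, α ^ 2, α ^ 2 + 1, α, α + 1] = v := by
    intro v
    rw [hC]
    simp only [Submodule.mem_span_insert, Submodule.mem_span_singleton]
    constructor
    · rintro ⟨a, _, ⟨b, _, ⟨c, _, ⟨d, rfl⟩, rfl⟩, rfl⟩, rfl⟩
      exact ⟨a, b, c, d, by simp only [add_assoc]⟩
    · rintro ⟨a, b, c, d, rfl⟩
      exact ⟨a, _, ⟨b, _, ⟨c, _, ⟨d, rfl⟩, rfl⟩, rfl⟩, by simp only [add_assoc]⟩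
  constructor
  · have hli : LinearIndependent F (![![1, 1, 1, 1, 1, 1, 1, 1],
        ![0, 0, α + 1, α + 1, α ^ 2 + α + 1, α ^ 2 + α + 1, α ^ 2 + 1, α ^ 2 + 1],
        ![0, 0, α ^ 2 + 1, α ^ 2 + 1, α + 1, α + 1, α ^ 2 + α + 1, α ^ 2 + α + 1],
        ![0, 1, α ^ 2 + α, α ^ 2 + α + 1, α ^ 2, α ^ 2 + 1, α, α + 1]] : Fin 4 → Fin 8 → F) := by
      rw [Fintype.linearIndependent_iff]
      intro g hg
      rw [Fin.sum_univ_four] at hg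
      -- a nontrivial relation would give the zero word weight at least `4`
      by_contra hcon
      have h4 := key (g 0) (g 1) (g 2) (g 3) (by
        rintro ⟨e0, e1, e2, e3⟩
        exact hcon (by intro i; fin_cases i <;> assumption))
      have h0 := (congrArg hammingNorm hg).trans hammingNorm_zero
      exact absurd (h4.trans_eq h0) (by norm_num)
    have hcard := finrank_span_eq_card hli
    have hrange : ∀ p q r s : Fin 8 → F, Set.range ![p, q, r, s] = {p, q, r, s} := by
      intro p q r s
      simp only [Matrix.range_cons, Matrix.range_empty, Set.union_empty, Set.singleton_union]
    rw [hrange, Fintype.card_fin] at hcard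
    rw [hC]
    exact hcard
  · have hlow : ∀ w ∈ {w : ℕ | ∃ v ∈ C, v ≠ 0 ∧ hammingNorm v = w}, 4 ≤ w := by
      rintro w ⟨v, hv, hv0, rfl⟩
      obtain ⟨a, b, c, d, rfl⟩ := (hspan v).1 hv
      apply key
      rintro ⟨rfl, rfl, rfl, rfl⟩
      exact hv0 (by simp)
    refine IsLeast.csInf_eq ⟨?_, hlow⟩
    -- the codeword of `x² + (α + 1) x`, whose first four entries vanish
    have h4 := key 0 (α + 1) 1 0 (by simp)
    refine ⟨_, (hspan _).2 ⟨0, α + 1, 1, 0, rfl⟩, ?_, le_antisymm ?_ h4⟩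
    · intro h
      have h0 := (congrArg hammingNorm h).trans hammingNorm_zero
      exact absurd (h4.trans_eq h0) (by norm_num)
    · have hz : (α + 1) * (α + 1) + (α ^ 2 + 1) = 0 := by
        linear_combination h2 * (α ^ 2 + α + 1)
      rw [hammingNorm]
      refine (Finset.card_le_card (t := {4, 5, 6, 7}) ?_).trans (by decide)
      intro i hi
      rw [Finset.mem_filter] at hi
      have hi := hi.2
      fin_cases i <;> simp [hz] at hi ⊢
end

section
/- Let q be an odd prime power and let F be a finite field with q² elements. Then the number of elements α ∈ F such that α^q + α ≠ 0 and there exists β ∈ F with β^q = β and β² + α^q + α = 0 equals (q² − q)/2. -/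
/-!
Write `K = {β : β^q = β}` and `N = {γ : γ^q = -γ}`. Since `x ↦ x^q` is an additive involution of `F`
and `2` is invertible, `F = K ⊕ N`, so `|K| |N| = q²`; as each of `K` and `N` is the root set of a
polynomial of degree `q`, both have exactly `q` elements. For `β ∈ K`, the solutions `α` of
`α^q + α = -β²` are exactly `γ - β²/2` with `γ ∈ N`. Hence `(β, γ) ↦ γ - β²/2` maps
`(K ∖ {0}) × N` onto the set being counted, and its fibres are the two-element sets
`{(β, γ), (-β, γ)}`, which gives `(q - 1) q / 2` elements.
-/

lemma char_dvd_of_card_eq_sq {q : ℕ} {F : Type*} [Field F] [Fintype F]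
    (hF : Fintype.card F = q ^ 2) (hq : IsPrimePow q) :
    ∃ p k : ℕ, p.Prime ∧ CharP F p ∧ q = p ^ k ∧ p ∣ q := by
  obtain ⟨r, k, hr, hk, rfl⟩ := hq
  obtain ⟨p, hchar, n, hp', hn⟩ := FiniteField.card' F
  have hr' : r.Prime := hr.nat_prime
  have : p ∣ (r ^ k) ^ 2 := by
    rw [← hF, hn]
    exact dvd_pow_self _ n.pos.ne'
  have hpr : p = r :=
    (Nat.prime_dvd_prime_iff_eq hp' hr').1 (hp'.dvd_of_dvd_pow (hp'.dvd_of_dvd_pow this))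
  subst hpr
  exact ⟨p, k, hp', hchar, rfl, dvd_pow_self _ hk.ne'⟩

/-- A root count for `X ^ q - c X`, applied with `c = 1` and `c = -1`. -/
lemma card_pow_eq_mul_le {q : ℕ} {F : Type*} [Field F] [Fintype F] [DecidableEq F]
    (hq : 1 < q) (c : F) :
    (Finset.univ.filter fun x : F => x ^ q = c * x).card ≤ q := by
  open Polynomial in
  have hdeg : (X ^ q - C c * X : F[X]).natDegree = q := by
    compute_degree!
    all_goals first | exact hq.le | simp [hq.ne']
  have hne : (Polynomial.X ^ q - Polynomial.C c * Polynomial.X : Polynomial F) ≠ 0 := by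
    intro h
    rw [h] at hdeg
    simp at hdeg
    omega
  refine le_of_le_of_eq (Polynomial.card_le_degree_of_subset_roots ?_) hdeg
  intro x hx
  have hx' : x ^ q = c * x := by simpa using hx
  simp [Polynomial.mem_roots hne, hx']

/-- For `q` an odd prime power and `F` the field with `q²` elements, there are
exactly `(q² − q)/2` elements `α ∈ F` with `α^q + α ≠ 0` such that
`β² + α^q + α = 0` has a solution `β` in the subfield `{β : β^q = β}`. -/
theorem stmt_17 (q : ℕ) (hq : IsPrimePow q) (hodd : Odd q) (F : Type*) [Field F]
    [Fintype F] (hF : Fintype.card F = q ^ 2) :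
    Nat.card {α : F // α ^ q + α ≠ 0 ∧ ∃ β : F, β ^ q = β ∧ β ^ 2 + α ^ q + α = 0}
      = (q ^ 2 - q) / 2 := by
  classical
  obtain ⟨p, k, hp, hchar, hqk, hpq⟩ := char_dvd_of_card_eq_sq hF hq
  have := Fact.mk hp
  have hq1 : 1 < q := hq.one_lt
  have hadd (x y : F) : (x + y) ^ q = x ^ q + y ^ q := by
    rw [hqk]
    exact add_pow_char_pow x y p k
  have hneg (x : F) : (-x) ^ q = -x ^ q := hodd.neg_pow x
  have hinv (x : F) : (x ^ q) ^ q = x := by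
    rw [← pow_mul, ← sq, ← hF, FiniteField.pow_card]
  have h2 : (2 : F) ≠ 0 := by
    intro h
    have h' : ((2 : ℕ) : F) = 0 := by exact_mod_cast h
    rw [CharP.cast_eq_zero_iff F p, Nat.prime_dvd_prime_iff_eq hp Nat.prime_two] at h'
    subst h'
    exact (Nat.not_even_iff_odd.2 hodd) (even_iff_two_dvd.2 hpq)
  have h2q : (2 : F) ^ q = 2 := by
    rw [← one_add_one_eq_two, hadd, one_pow]
  set K : Finset F := Finset.univ.filter fun x : F => x ^ q = 1 * x with hK
  set N : Finset F := Finset.univ.filter fun x : F => x ^ q = (-1) * x with hN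
  have memK (x : F) : x ∈ K ↔ x ^ q = x := by simp [hK]
  have memN (x : F) : x ∈ N ↔ x ^ q = -x := by simp [hN]
  have hKle : K.card ≤ q := card_pow_eq_mul_le hq1 1
  have hNle : N.card ≤ q := card_pow_eq_mul_le hq1 (-1)
  have hprod : q ^ 2 ≤ K.card * N.card := by
    rw [← Finset.card_product, ← hF, ← Finset.card_univ]
    -- `x` is recovered as half the sum of its doubled components `x + x^q ∈ K`, `x - x^q ∈ N`.
    refine Finset.card_le_card_of_injOn (fun x => (x + x ^ q, x - x ^ q)) ?_ ?_
    · intro x _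
      simp only [Finset.coe_product, Set.mem_prod, Finset.mem_coe, memK, memN]
      constructor
      · rw [hadd, hinv, add_comm]
      · rw [sub_eq_add_neg, hadd, hneg, hinv]
        ring
    · intro x _ y _ h
      simp only [Prod.mk.injEq] at h
      exact mul_left_cancel₀ h2 (by linear_combination h.1 + h.2)
  have hKc : K.card = q := by nlinarith
  have hNc : N.card = q := by nlinarith
  set A : Finset F := Finset.univ.filter fun α : F =>
    α ^ q + α ≠ 0 ∧ ∃ β : F, β ^ q = β ∧ β ^ 2 + α ^ q + α = 0 with hA
  have hcardA : Nat.card {α : F // α ^ q + α ≠ 0 ∧ ∃ β : F, β ^ q = β ∧ β ^ 2 + α ^ q + α = 0}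
      = A.card := by
    rw [Nat.card_eq_fintype_card, Fintype.card_subtype]
  have hsol (β γ : F) (hβ : β ^ q = β) (hγ : γ ^ q = -γ) :
      (γ - β ^ 2 / 2) ^ q + (γ - β ^ 2 / 2) = -β ^ 2 := by
    rw [sub_eq_add_neg, hadd, hneg, div_pow, pow_right_comm, hβ, hγ, h2q]
    field_simp
    ring
  have hmaps : ∀ x ∈ (K.erase 0) ×ˢ N, x.2 - x.1 ^ 2 / 2 ∈ A := by
    rintro ⟨β, γ⟩ hx
    simp only [Finset.mem_product, Finset.mem_erase, memK, memN] at hx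
    obtain ⟨⟨hβ0, hβ⟩, hγ⟩ := hx
    have h := hsol β γ hβ hγ
    simp only [hA, Finset.mem_filter, Finset.mem_univ, true_and]
    refine ⟨?_, β, hβ, ?_⟩
    · rw [h]
      exact neg_ne_zero.2 (pow_ne_zero 2 hβ0)
    · rw [add_assoc, h, add_neg_cancel]
  have hfib : ∀ α ∈ A,
      (((K.erase 0) ×ˢ N).filter fun x => x.2 - x.1 ^ 2 / 2 = α).card = 2 := by
    intro α hα
    simp only [hA, Finset.mem_filter, Finset.mem_univ, true_and] at hα
    obtain ⟨hα0, β, hβ, hαβ⟩ := hα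
    have hβ0 : β ≠ 0 := by
      rintro rfl
      exact hα0 (by linear_combination hαβ)
    have hγ : (α + β ^ 2 / 2) ^ q = -(α + β ^ 2 / 2) := by
      rw [hadd, div_pow, pow_right_comm, hβ, h2q]
      field_simp
      linear_combination 2 * hαβ
    rw [Finset.card_eq_two]
    refine ⟨(β, α + β ^ 2 / 2), (-β, α + β ^ 2 / 2), ?_, ?_⟩
    · intro h
      have h' : β = -β := (Prod.mk.inj h).1
      exact mul_ne_zero h2 hβ0 (by linear_combination h')
    · ext ⟨b, c⟩
      simp only [Finset.mem_filter, Finset.mem_product, Finset.mem_erase, memK, memN,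
        Finset.mem_insert, Finset.mem_singleton, Prod.mk.injEq]
      constructor
      · rintro ⟨⟨⟨-, hb⟩, hc⟩, rfl⟩
        have h := hsol b c hb hc
        have hbβ : b ^ 2 = β ^ 2 := by linear_combination h - hαβ
        rcases sq_eq_sq_iff_eq_or_eq_neg.1 hbβ with rfl | rfl
        · left; exact ⟨rfl, by ring⟩
        · right; exact ⟨rfl, by ring⟩
      · rintro (⟨rfl, rfl⟩ | ⟨rfl, rfl⟩)
        · exact ⟨⟨⟨hβ0, hβ⟩, hγ⟩, by ring⟩
        · exact ⟨⟨⟨neg_ne_zero.2 hβ0, by rw [hneg, hβ]⟩, hγ⟩, by ring⟩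
  have hcount := Finset.card_eq_sum_card_fiberwise hmaps
  rw [Finset.sum_congr rfl hfib, Finset.sum_const, smul_eq_mul, Finset.card_product,
    Finset.card_erase_of_mem ((memK 0).2 (zero_pow (by omega))), hKc, hNc] at hcount
  have hsq : q ^ 2 - q = (q - 1) * q := by rw [Nat.sub_mul, one_mul, sq]
  rw [hcardA, hsq, hcount, Nat.mul_div_cancel _ two_pos]
end
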